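/- For j ∈ {0,1} and every τ in the complex upper half plane, f_{4,j}(τ)⁴ = E'_{4,2}(τ) − (−1)ʲ·8i·(η(τ)η(4τ)/η(2τ))⁴ (note that 8i is a square root of −64); moreover f_{4,0}(τ)·f_{4,1}(τ) = θ(τ)². -/

import Mathlib

open Complex

/-- `q = exp(2πiτ)`. -/
noncomputable def qq (τ : ℂ) : ℂ := Complex.exp (2 * Real.pi * Complex.I * τ)

/-- `σ_k(n) = Σ_{d ∣ n} d^k`, as a complex number. -/
noncomputable def sigmaC (k n : ℕ) : ℂ := ∑ d ∈ n.divisors, (d : ℂ) ^ k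

/-- Eisenstein series `E₂(τ) = 1 - 24 Σ_{n≥1} σ₁(n) qⁿ`. -/
noncomputable def E₂ (τ : ℂ) : ℂ := 1 - 24 * ∑' n : ℕ, sigmaC 1 (n + 1) * qq τ ^ (n + 1)

/-- Eisenstein series `E₄(τ) = 1 + 240 Σ_{n≥1} σ₃(n) qⁿ`. -/
noncomputable def E₄ (τ : ℂ) : ℂ := 1 + 240 * ∑' n : ℕ, sigmaC 3 (n + 1) * qq τ ^ (n + 1)

/-- Eisenstein series `E₆(τ) = 1 - 504 Σ_{n≥1} σ₅(n) qⁿ`. -/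
noncomputable def E₆ (τ : ℂ) : ℂ := 1 - 504 * ∑' n : ℕ, sigmaC 5 (n + 1) * qq τ ^ (n + 1)

/-- Dedekind eta function `η(τ) = exp(πiτ/12) ∏_{n≥1} (1 - qⁿ)`. -/
noncomputable def η (τ : ℂ) : ℂ :=
  Complex.exp (Real.pi * Complex.I * τ / 12) * ∏' n : ℕ, (1 - qq τ ^ (n + 1))

/-- Theta function `θ(τ) = Σ_{n ∈ ℤ} q^{n²}`. -/
noncomputable def θ (τ : ℂ) : ℂ := ∑' n : ℤ, qq τ ^ (n ^ 2)

/-- The character `χ₋₄`: `χ₋₄(d) = 1, -1, 0` according as `d ≡ 1, 3, 0/2 (mod 4)`. -/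
noncomputable def χ₄ (d : ℕ) : ℂ := if d % 4 = 1 then 1 else if d % 4 = 3 then -1 else 0

/-- The character `χ₋₃`: `χ₋₃(d) = 1, -1, 0` according as `d ≡ 1, 2, 0 (mod 3)`. -/
noncomputable def χ₃ (d : ℕ) : ℂ := if d % 3 = 1 then 1 else if d % 3 = 2 then -1 else 0

/-- `E_{1,-4}(τ) = 1/4 + Σ_{n≥1} (Σ_{d∣n} χ₋₄(d)) qⁿ`. -/
noncomputable def E₁₄ (τ : ℂ) : ℂ :=
  1 / 4 + ∑' n : ℕ, (∑ d ∈ (n + 1).divisors, χ₄ d) * qq τ ^ (n + 1)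

/-- `E_{1,-3}(τ) = 1/6 + Σ_{n≥1} (Σ_{d∣n} χ₋₃(d)) qⁿ`. -/
noncomputable def E₁₃ (τ : ℂ) : ℂ :=
  1 / 6 + ∑' n : ℕ, (∑ d ∈ (n + 1).divisors, χ₃ d) * qq τ ^ (n + 1)

/-- `E_{2,2}(τ) = 2E₂(2τ) - E₂(τ)`. -/
noncomputable def E₂₂ (τ : ℂ) : ℂ := 2 * E₂ (2 * τ) - E₂ τ

/-- `E_{2,4}(τ) = (4E₄(2τ) - E₄(τ))/3`. -/
noncomputable def E₂₄ (τ : ℂ) : ℂ := (4 * E₄ (2 * τ) - E₄ τ) / 3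

/-- `E_{3,2}(τ) = (3E₂(3τ) - E₂(τ))/2`. -/
noncomputable def E₃₂ (τ : ℂ) : ℂ := (3 * E₂ (3 * τ) - E₂ τ) / 2

/-- `E_{3,4}(τ) = (9E₄(3τ) - E₄(τ))/8`. -/
noncomputable def E₃₄ (τ : ℂ) : ℂ := (9 * E₄ (3 * τ) - E₄ τ) / 8

/-- `E_{4,2}(τ) = (4E₂(4τ) - E₂(τ))/3`. -/
noncomputable def E₄₂ (τ : ℂ) : ℂ := (4 * E₂ (4 * τ) - E₂ τ) / 3

/-- `E'_{4,2}(τ) = 4E₂(4τ) - 4E₂(2τ) + E₂(τ)`. -/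
noncomputable def E₄₂' (τ : ℂ) : ℂ := 4 * E₂ (4 * τ) - 4 * E₂ (2 * τ) + E₂ τ

/-- `f_{1,j}(τ) = 2E₂(τ) - ((3+(-1)ʲi√3)/6)E₂(τ/2) - ((3-(-1)ʲi√3)/6)E₂((τ+1)/2)`. -/
noncomputable def f₁ (j : ℕ) (τ : ℂ) : ℂ :=
  2 * E₂ τ - ((3 + (-1 : ℂ) ^ j * Complex.I * Real.sqrt 3) / 6) * E₂ (τ / 2)
    - ((3 - (-1 : ℂ) ^ j * Complex.I * Real.sqrt 3) / 6) * E₂ ((τ + 1) / 2)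

/-- `g_{1,j}(τ) = (3/2)E₂(τ) - (1/4) Σ_{0≤m≤2, m≢j (mod 3)} E₂((τ+m)/3)`. -/
noncomputable def g₁ (j : ℕ) (τ : ℂ) : ℂ :=
  (3 / 2) * E₂ τ -
    (1 / 4) * ∑ m ∈ (Finset.range 3).filter (fun m => ¬ m % 3 = j % 3), E₂ ((τ + m) / 3)

/-- `f_{2,j}(τ) = 4E_{1,-4}(τ) + (-1)ʲ·2i·(E_{1,-4}(τ/2) - E_{1,-4}((τ+1)/2))`. -/
noncomputable def f₂ (j : ℕ) (τ : ℂ) : ℂ :=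
  4 * E₁₄ τ + (-1 : ℂ) ^ j * 2 * Complex.I * (E₁₄ (τ / 2) - E₁₄ ((τ + 1) / 2))

/-- `f_{3,j}(τ) = 6E_{1,-3}(2τ) + (-1)ʲ·i√3·(E_{1,-3}(τ/2) - E_{1,-3}((τ+1)/2))`. -/
noncomputable def f₃ (j : ℕ) (τ : ℂ) : ℂ :=
  6 * E₁₃ (2 * τ) +
    (-1 : ℂ) ^ j * Complex.I * Real.sqrt 3 * (E₁₃ (τ / 2) - E₁₃ ((τ + 1) / 2))

/-- `f_{4,j}(τ) = θ(τ/2 - (-1)ʲ/4)`. -/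
noncomputable def f₄ (j : ℕ) (τ : ℂ) : ℂ := θ (τ / 2 - (-1 : ℂ) ^ j / 4)

/-- `g_{4,j}(τ) = 2θ(2τ)² - θ((τ+j)/2)²`. -/
noncomputable def g₄ (j : ℕ) (τ : ℂ) : ℂ := 2 * θ (2 * τ) ^ 2 - θ ((τ + j) / 2) ^ 2

/-- `E_{3,-3,1}(τ) = -1/9 + Σ_{n≥1} (Σ_{d∣n} d²χ₋₃(d)) qⁿ`. -/
noncomputable def E₃₃₁ (τ : ℂ) : ℂ :=
  -(1 / 9) + ∑' n : ℕ, (∑ d ∈ (n + 1).divisors, (d : ℂ) ^ 2 * χ₃ d) * qq τ ^ (n + 1)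

/-- `E_{3,1,-3}(τ) = Σ_{n≥1} (Σ_{d∣n} d²χ₋₃(n/d)) qⁿ`. -/
noncomputable def E₃₁₃ (τ : ℂ) : ℂ :=
  ∑' n : ℕ, (∑ d ∈ (n + 1).divisors, (d : ℂ) ^ 2 * χ₃ ((n + 1) / d)) * qq τ ^ (n + 1)

/-- The Gaussian binomial coefficient `[n, k]_Q`, defined by the `q`-Pascal rule. -/
noncomputable def gaussBinom (Q : ℂ) : ℕ → ℕ → ℂ
  | _, 0 => 1
  | 0, _ + 1 => 0
  | n + 1, k + 1 => gaussBinom Q n k + Q ^ (k + 1) * gaussBinom Q n (k + 1)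

/-- The finite `q`-Pochhammer symbol `∏_{k < n} (1 - Q ^ (k + 1))`. -/
noncomputable def qPoch (Q : ℂ) (n : ℕ) : ℂ := ∏ k ∈ Finset.range n, (1 - Q ^ (k + 1))

/-- The Euler function `∏_{n ≥ 1} (1 - Q ^ n)`. -/
noncomputable def eulerPhi (Q : ℂ) : ℂ := ∏' n : ℕ, (1 - Q ^ (n + 1))

lemma gaussBinom_zero_right (Q : ℂ) (n : ℕ) : gaussBinom Q n 0 = 1 := by
  cases n <;> rfl

lemma gaussBinom_succ_succ (Q : ℂ) (n k : ℕ) :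
    gaussBinom Q (n + 1) (k + 1) = gaussBinom Q n k + Q ^ (k + 1) * gaussBinom Q n (k + 1) := rfl

lemma gaussBinom_eq_zero (Q : ℂ) {n k : ℕ} (h : n < k) : gaussBinom Q n k = 0 := by
  induction n generalizing k with
  | zero => obtain ⟨k, rfl⟩ := Nat.exists_eq_succ_of_ne_zero h.ne'; rfl
  | succ n ih =>
    obtain ⟨k, rfl⟩ := Nat.exists_eq_succ_of_ne_zero (by omega : k ≠ 0)
    rw [Nat.succ_eq_add_one, gaussBinom_succ_succ, ih (by omega), ih (by omega)]
    simp

lemma qPoch_succ (Q : ℂ) (n : ℕ) : qPoch Q (n + 1) = qPoch Q n * (1 - Q ^ (n + 1)) :=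
  Finset.prod_range_succ _ _

lemma gaussBinom_self (Q : ℂ) (n : ℕ) : gaussBinom Q n n = 1 := by
  induction n with
  | zero => rfl
  | succ n ih => rw [gaussBinom_succ_succ, ih, gaussBinom_eq_zero Q (by omega)]; simp

lemma gaussBinom_mul_qPoch (Q : ℂ) (k l : ℕ) :
    gaussBinom Q (k + l) k * (qPoch Q k * qPoch Q l) = qPoch Q (k + l) := by
  induction h : k + l generalizing k l with
  | zero =>
    obtain ⟨rfl, rfl⟩ : k = 0 ∧ l = 0 := by omega
    simp [qPoch, gaussBinom_zero_right]
  | succ m ih =>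
    rcases k with _ | k
    · obtain rfl : l = m + 1 := by omega
      simp [gaussBinom_zero_right, qPoch]
    rcases l with _ | l
    · obtain rfl : k = m := by omega
      simp [gaussBinom_self, qPoch]
    have h1 := ih k (l + 1) (by omega)
    have h2 := ih (k + 1) l (by omega)
    obtain rfl : m = k + l + 1 := by omega
    rw [gaussBinom_succ_succ, qPoch_succ Q (k + l + 1)]
    rw [qPoch_succ] at h1 h2 ⊢
    rw [qPoch_succ Q l]
    have e : Q ^ (k + l + 1 + 1) = Q ^ (k + 1) * Q ^ (l + 1) := by ring
    rw [e]
    linear_combination (1 - Q ^ (k + 1)) * h1 + Q ^ (k + 1) * (1 - Q ^ (l + 1)) * h2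

/-- The `q`-binomial theorem. -/
lemma prod_one_add_mul_pow (Q z : ℂ) (n : ℕ) :
    ∏ k ∈ Finset.range n, (1 + z * Q ^ k) =
      ∑ j ∈ Finset.range (n + 1), gaussBinom Q n j * Q ^ (j.choose 2) * z ^ j := by
  induction n generalizing z with
  | zero => simp [gaussBinom_zero_right]
  | succ n ih =>
    rw [Finset.prod_range_succ', Finset.sum_range_succ']
    have h : ∏ k ∈ Finset.range n, (1 + z * Q ^ (k + 1)) =
        ∏ k ∈ Finset.range n, (1 + (z * Q) * Q ^ k) :=
      Finset.prod_congr rfl fun k _ => by ring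
    rw [h, ih]
    have h1 : ∀ j, gaussBinom Q (n + 1) (j + 1) * Q ^ ((j + 1).choose 2) * z ^ (j + 1) =
        z * (gaussBinom Q n j * Q ^ (j.choose 2) * (z * Q) ^ j) +
        gaussBinom Q n (j + 1) * Q ^ ((j + 1).choose 2) * (z * Q) ^ (j + 1) := by
      intro j
      rw [gaussBinom_succ_succ, Nat.choose_succ_succ' j 1, Nat.choose_one_right, pow_add]
      ring
    simp_rw [h1]
    rw [Finset.sum_add_distrib, ← Finset.mul_sum]
    have h2 : ∑ j ∈ Finset.range (n + 1), gaussBinom Q n j * Q ^ (j.choose 2) * (z * Q) ^ j =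
        ∑ j ∈ Finset.range (n + 1),
          gaussBinom Q n (j + 1) * Q ^ ((j + 1).choose 2) * (z * Q) ^ (j + 1) + 1 := by
      have := Finset.sum_range_succ'
        (fun j => gaussBinom Q n j * Q ^ (j.choose 2) * (z * Q) ^ j) (n + 1)
      rw [Finset.sum_range_succ] at this
      simpa [gaussBinom_eq_zero Q (Nat.lt_succ_self n), gaussBinom_zero_right] using this
    simp only [gaussBinom_zero_right, pow_zero, Nat.choose_zero_succ, mul_one]
    linear_combination h2

/-- The coefficient `[2N, N + n]_Q` of the finite triple product, extended by zero. -/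
noncomputable def centralGaussBinom (Q : ℂ) (N : ℕ) (n : ℤ) : ℂ :=
  if -(N : ℤ) ≤ n then gaussBinom Q (2 * N) (N + n).toNat else 0

lemma centralGaussBinom_eq_zero (Q : ℂ) (N : ℕ) {n : ℤ}
    (hn : n ∉ Finset.Icc (-(N : ℤ)) N) : centralGaussBinom Q N n = 0 := by
  unfold centralGaussBinom
  split_ifs with h
  · apply gaussBinom_eq_zero
    simp only [Finset.mem_Icc, not_and, not_le] at hn
    have := hn h
    omega
  · rfl

/-- The finite form of the Jacobi triple product identity. -/
lemma prod_one_add_mul_one_add_inv (p z : ℂ) (hp : p ≠ 0) (hz : z ≠ 0) (N : ℕ) :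
    ∏ k ∈ Finset.range N, ((1 + z * p ^ (2 * k + 1)) * (1 + z⁻¹ * p ^ (2 * k + 1))) =
      ∑ n ∈ Finset.Icc (-(N : ℤ)) N, centralGaussBinom (p ^ 2) N n * (z ^ n * p ^ (n ^ 2)) := by
  have key := prod_one_add_mul_pow (p ^ 2) (z * p * (p ^ (2 * N))⁻¹) (2 * N)
  have hprod : ∏ k ∈ Finset.range (2 * N), (1 + z * p * (p ^ (2 * N))⁻¹ * (p ^ 2) ^ k) =
      z ^ N * (p ^ (N ^ 2))⁻¹ *
      ∏ k ∈ Finset.range N, ((1 + z * p ^ (2 * k + 1)) * (1 + z⁻¹ * p ^ (2 * k + 1))) := by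
    rw [two_mul, Finset.prod_range_add, Finset.prod_mul_distrib, ← Finset.prod_range_reflect]
    have e1 : ∀ k ∈ Finset.range N, 1 + z * p * (p ^ (N + N))⁻¹ * (p ^ 2) ^ (N - 1 - k) =
        (z * (p ^ (2 * k + 1))⁻¹) * (1 + z⁻¹ * p ^ (2 * k + 1)) := by
      intro k hk
      obtain ⟨m, rfl⟩ : ∃ m, N = m + k + 1 := ⟨N - 1 - k, by
        have := Finset.mem_range.1 hk; omega⟩
      rw [show m + k + 1 - 1 - k = m by omega]
      field_simp
      ring
    have e2 : ∀ k ∈ Finset.range N, 1 + z * p * (p ^ (N + N))⁻¹ * (p ^ 2) ^ (N + k) =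
        1 + z * p ^ (2 * k + 1) := by
      intro k _
      field_simp
      ring
    have e3 : ∏ k ∈ Finset.range N, (z * (p ^ (2 * k + 1))⁻¹) = z ^ N * (p ^ (N ^ 2))⁻¹ := by
      clear key e1 e2
      induction N with
      | zero => simp
      | succ N ih =>
        rw [Finset.prod_range_succ, ih]
        field_simp
        ring
    rw [Finset.prod_congr rfl e1, Finset.prod_congr rfl e2, Finset.prod_mul_distrib, e3]
    ring
  rw [hprod] at key
  have hne : z ^ N * (p ^ (N ^ 2))⁻¹ ≠ 0 := by positivity
  apply mul_left_cancel₀ hne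
  rw [key, Finset.mul_sum]
  refine Finset.sum_bij' (fun j _ => (j : ℤ) - N) (fun n _ => (n + N).toNat) ?_ ?_ ?_ ?_ ?_
  · intro j hj
    simp only [Finset.mem_range, Finset.mem_Icc] at *
    omega
  · intro j hj
    simp only [Finset.mem_range, Finset.mem_Icc] at *
    omega
  · intro j hj
    simp
  · intro j hj
    simp only [Finset.mem_Icc] at *
    omega
  · intro j hj
    rw [centralGaussBinom, if_pos (by omega), show ((N : ℤ) + (j - N)).toNat = j by omega]
    have hz' : z ^ N * z ^ ((j : ℤ) - N) = z ^ j := by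
      rw [← zpow_natCast, ← zpow_add₀ hz, ← zpow_natCast]; congr 1; ring
    have hc : (j : ℤ) * (j - 1) = 2 * (j.choose 2 : ℕ) := by
      have := Nat.choose_two_right j
      have h2 : j * (j - 1) = 2 * j.choose 2 := by
        rw [this, Nat.mul_div_cancel' (Nat.even_mul_pred_self j).two_dvd]
      rcases j with _ | j
      · simp
      · have h3 : ((j + 1) * j : ℤ) = 2 * ((j + 1).choose 2 : ℕ) := by exact_mod_cast h2
        push_cast at h3 ⊢
        linarith
    have hp' : (p ^ (N ^ 2))⁻¹ * p ^ (((j : ℤ) - N) ^ 2) =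
        (p ^ 2) ^ (j.choose 2) * (p * (p ^ (2 * N))⁻¹) ^ j := by
      simp only [← zpow_natCast, ← zpow_neg, ← zpow_mul, ← zpow_add₀ hp,
        ← zpow_one_add₀ hp]
      congr 1
      push_cast
      linear_combination hc
    rw [mul_assoc z, mul_pow, ← hz']
    linear_combination gaussBinom (p ^ 2) (2 * N) j * (z ^ N * z ^ ((j : ℤ) - N)) * (-hp')

lemma summable_abs_pow_mul_norm_zpow (k : ℕ) {z p : ℂ} (hp : p ≠ 0) (hp1 : ‖p‖ < 1)
    (hz : z ≠ 0) : Summable fun n : ℤ => (|n| ^ k : ℝ) * ‖z ^ n * p ^ (n ^ 2)‖ := by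
  have hlog : Real.log ‖p‖ < 0 := Real.log_neg (norm_pos_iff.2 hp) hp1
  have hT : 0 < -Real.log ‖p‖ / Real.pi := div_pos (by linarith) Real.pi_pos
  refine Summable.of_nonneg_of_le (fun n => by positivity) (fun n => ?_)
    (summable_pow_mul_jacobiTheta₂_term_bound (|Real.log ‖z‖| / (2 * Real.pi)) hT k)
  push_cast
  refine mul_le_mul_of_nonneg_left ?_ (by positivity)
  have hexp : ∀ {r : ℝ}, 0 < r → ∀ m : ℤ, r ^ m = Real.exp (m * Real.log r) := fun hr m => by
    rw [mul_comm, Real.exp_mul, Real.exp_log hr, Real.rpow_intCast]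
  rw [norm_mul, norm_zpow, norm_zpow, hexp (norm_pos_iff.2 hz), hexp (norm_pos_iff.2 hp),
    ← Real.exp_add]
  apply Real.exp_le_exp.2
  have h1 : (n : ℝ) * Real.log ‖z‖ ≤ |(n : ℝ)| * |Real.log ‖z‖| := by
    rw [← abs_mul]; exact le_abs_self _
  have h2 : -Real.pi * (-Real.log ‖p‖ / Real.pi * n ^ 2 -
      2 * (|Real.log ‖z‖| / (2 * Real.pi)) * |(n : ℝ)|) =
      |(n : ℝ)| * |Real.log ‖z‖| + n ^ 2 * Real.log ‖p‖ := by
    field_simp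
    ring
  push_cast at h2 ⊢
  rw [h2]
  linarith

lemma summable_zpow_mul_zpow_sq {z p : ℂ} (hp : p ≠ 0) (hp1 : ‖p‖ < 1) (hz : z ≠ 0) :
    Summable fun n : ℤ => z ^ n * p ^ (n ^ 2) :=
  .of_norm (by simpa using summable_abs_pow_mul_norm_zpow 0 hp hp1 hz)

lemma summable_mul_zpow_mul_zpow_sq {z p : ℂ} (hp : p ≠ 0) (hp1 : ‖p‖ < 1) (hz : z ≠ 0) :
    Summable fun n : ℤ => (n : ℂ) * (z ^ n * p ^ (n ^ 2)) :=
  .of_norm (by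
    refine (summable_abs_pow_mul_norm_zpow 1 hp hp1 hz).congr fun n => ?_
    rw [norm_mul (n : ℂ), Complex.norm_intCast, pow_one, Int.cast_abs])

lemma one_sub_pow_succ_ne_zero {Q : ℂ} (hQ : ‖Q‖ < 1) (n : ℕ) : 1 - Q ^ (n + 1) ≠ 0 := by
  intro h
  have h1 : ‖Q‖ ^ (n + 1) < 1 := pow_lt_one₀ (norm_nonneg _) hQ (by omega)
  rw [← norm_pow, ← sub_eq_zero.1 h] at h1
  simp at h1

lemma qPoch_ne_zero {Q : ℂ} (hQ : ‖Q‖ < 1) (n : ℕ) : qPoch Q n ≠ 0 :=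
  Finset.prod_ne_zero_iff.2 fun k _ => one_sub_pow_succ_ne_zero hQ k

lemma eulerPhi_ne_zero {Q : ℂ} (hQ : ‖Q‖ < 1) : eulerPhi Q ≠ 0 := by
  unfold eulerPhi
  simp_rw [sub_eq_add_neg]
  apply tprod_one_add_ne_zero_of_summable
  · intro n
    simpa [sub_eq_add_neg] using one_sub_pow_succ_ne_zero hQ n
  · simpa using (summable_nat_add_iff 1).mpr (summable_geometric_of_lt_one (norm_nonneg _) hQ)

lemma tendsto_qPoch {Q : ℂ} (hQ : ‖Q‖ < 1) :
    Filter.Tendsto (qPoch Q) Filter.atTop (nhds (eulerPhi Q)) :=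
  (ModularForm.multipliable_one_sub_pow hQ).hasProd.tendsto_prod_nat

lemma centralGaussBinom_eq_div {Q : ℂ} (hQ : ‖Q‖ < 1) {N : ℕ} {n : ℤ}
    (hn : n ∈ Finset.Icc (-(N : ℤ)) N) :
    centralGaussBinom Q N n =
      qPoch Q (2 * N) / (qPoch Q (N + n).toNat * qPoch Q (N - n).toNat) := by
  rw [Finset.mem_Icc] at hn
  rw [eq_div_iff (mul_ne_zero (qPoch_ne_zero hQ _) (qPoch_ne_zero hQ _)), centralGaussBinom,
    if_pos hn.1]
  have h := gaussBinom_mul_qPoch Q (N + n).toNat (N - n).toNat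
  rwa [show (N + n).toNat + (N - n).toNat = 2 * N by omega] at h

/-- Passing to the limit in the coefficients of the finite triple product. -/
lemma tendsto_tsum_centralGaussBinom {Q : ℂ} (hQ : ‖Q‖ < 1) {a : ℤ → ℂ} (ha : Summable a) :
    Filter.Tendsto (fun N : ℕ => ∑ n ∈ Finset.Icc (-(N : ℤ)) N, centralGaussBinom Q N n * a n)
      Filter.atTop (nhds ((eulerPhi Q)⁻¹ * ∑' n, a n)) := by
  have hφ := eulerPhi_ne_zero hQ
  obtain ⟨C, hC⟩ := (Metric.isBounded_range_of_tendsto _ (tendsto_qPoch hQ)).exists_norm_le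
  obtain ⟨D, hD⟩ := (Metric.isBounded_range_of_tendsto _
    ((tendsto_qPoch hQ).inv₀ hφ)).exists_norm_le
  have hC' : ∀ n, ‖qPoch Q n‖ ≤ C := fun n => hC _ ⟨n, rfl⟩
  have hD' : ∀ n, ‖(qPoch Q n)⁻¹‖ ≤ D := fun n => hD _ ⟨n, rfl⟩
  have hC0 : 0 ≤ C := (norm_nonneg _).trans (hC' 0)
  have hD0 : 0 ≤ D := (norm_nonneg _).trans (hD' 0)
  have hsum : ∀ N : ℕ, ∑ n ∈ Finset.Icc (-(N : ℤ)) N, centralGaussBinom Q N n * a n =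
      ∑' n, centralGaussBinom Q N n * a n := fun N =>
    (tsum_eq_sum fun n hn => by rw [centralGaussBinom_eq_zero Q N hn, zero_mul]).symm
  simp_rw [hsum, ← tsum_mul_left]
  refine tendsto_tsum_of_dominated_convergence (bound := fun n => C * (D * D) * ‖a n‖)
    (ha.norm.mul_left _) (fun n => ?_) (Filter.Eventually.of_forall fun N n => ?_)
  · refine Filter.Tendsto.mul_const _ ?_
    have hlim : Filter.Tendsto (fun N : ℕ =>
        qPoch Q (2 * N) / (qPoch Q (N + n).toNat * qPoch Q (N - n).toNat)) Filter.atTop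
        (nhds (eulerPhi Q / (eulerPhi Q * eulerPhi Q))) := by
      refine Filter.Tendsto.div ((tendsto_qPoch hQ).comp ?_)
        (((tendsto_qPoch hQ).comp ?_).mul ((tendsto_qPoch hQ).comp ?_)) (mul_ne_zero hφ hφ)
      · exact Filter.tendsto_atTop_mono (fun N => (by omega : N ≤ 2 * N)) Filter.tendsto_id
      · refine Filter.tendsto_atTop_atTop.2 fun b => ⟨b + n.natAbs, fun N hN => by omega⟩
      · refine Filter.tendsto_atTop_atTop.2 fun b => ⟨b + n.natAbs, fun N hN => by omega⟩
    rw [show eulerPhi Q / (eulerPhi Q * eulerPhi Q) = (eulerPhi Q)⁻¹ by field_simp] at hlim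
    refine hlim.congr' ?_
    filter_upwards [Filter.eventually_ge_atTop n.natAbs] with N hN
    rw [centralGaussBinom_eq_div hQ (Finset.mem_Icc.2 ⟨by omega, by omega⟩)]
  · rw [norm_mul]
    refine mul_le_mul_of_nonneg_right ?_ (norm_nonneg _)
    by_cases hn : n ∈ Finset.Icc (-(N : ℤ)) N
    · rw [centralGaussBinom_eq_div hQ hn, div_eq_mul_inv, mul_inv, norm_mul, norm_mul]
      gcongr
      exacts [hC' _, hD' _, hD' _]
    · rw [centralGaussBinom_eq_zero Q N hn, norm_zero]
      positivity

lemma norm_sq_lt_one {p : ℂ} (hp : ‖p‖ < 1) : ‖p ^ 2‖ < 1 := by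
  rw [norm_pow]
  exact pow_lt_one₀ (norm_nonneg _) hp two_ne_zero

lemma multipliable_one_add_mul_pow {p : ℂ} (hp1 : ‖p‖ < 1) (z : ℂ) :
    Multipliable fun k : ℕ => 1 + z * p ^ (2 * k + 1) := by
  apply multipliable_one_add_of_summable
  refine ((summable_geometric_of_lt_one (norm_nonneg _) (norm_sq_lt_one hp1)).mul_left
    (‖z‖ * ‖p‖)).congr fun k => ?_
  rw [norm_mul, norm_pow, norm_pow]
  ring

/-- The Jacobi triple product identity. -/
theorem jacobi_triple_product {p z : ℂ} (hp : p ≠ 0) (hp1 : ‖p‖ < 1) (hz : z ≠ 0) :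
    ∑' n : ℤ, z ^ n * p ^ (n ^ 2) = eulerPhi (p ^ 2) *
      ((∏' k : ℕ, (1 + z * p ^ (2 * k + 1))) * ∏' k : ℕ, (1 + z⁻¹ * p ^ (2 * k + 1))) := by
  have hQ := norm_sq_lt_one hp1
  have h1 := tendsto_tsum_centralGaussBinom hQ (summable_zpow_mul_zpow_sq hp hp1 hz)
  have h2 := (multipliable_one_add_mul_pow hp1 z).hasProd.tendsto_prod_nat.mul
    (multipliable_one_add_mul_pow hp1 z⁻¹).hasProd.tendsto_prod_nat
  simp_rw [← Finset.prod_mul_distrib, prod_one_add_mul_one_add_inv p z hp hz] at h2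
  rw [← tendsto_nhds_unique h1 h2, mul_inv_cancel_left₀ (eulerPhi_ne_zero hQ)]

/-- Jacobi's identity for the cube of the Euler function, as a bilateral sum. -/
theorem tsum_mul_neg_inv_zpow {p : ℂ} (hp : p ≠ 0) (hp1 : ‖p‖ < 1) :
    ∑' n : ℤ, (n : ℂ) * ((-p⁻¹) ^ n * p ^ (n ^ 2)) = -eulerPhi (p ^ 2) ^ 3 := by
  have hQ := norm_sq_lt_one hp1
  have hφ := eulerPhi_ne_zero hQ
  set w : ℂ := -p⁻¹ with hw
  have hw0 : w ≠ 0 := neg_ne_zero.2 (inv_ne_zero hp)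
  have h1 := tendsto_tsum_centralGaussBinom hQ (summable_mul_zpow_mul_zpow_sq hp hp1 hw0)
  have hfin : ∀ N : ℕ, ∑ n ∈ Finset.Icc (-((N + 1 : ℕ) : ℤ)) (N + 1 : ℕ),
      centralGaussBinom (p ^ 2) (N + 1) n * ((n : ℂ) * (w ^ n * p ^ (n ^ 2))) =
      -(qPoch (p ^ 2) N * qPoch (p ^ 2) (N + 1)) := by
    intro N
    have hd1 : HasDerivAt (fun z : ℂ => ∑ n ∈ Finset.Icc (-((N + 1 : ℕ) : ℤ)) (N + 1 : ℕ),
        centralGaussBinom (p ^ 2) (N + 1) n * (z ^ n * p ^ (n ^ 2)))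
        (∑ n ∈ Finset.Icc (-((N + 1 : ℕ) : ℤ)) (N + 1 : ℕ),
        centralGaussBinom (p ^ 2) (N + 1) n * (((n : ℂ) * w ^ (n - 1)) * p ^ (n ^ 2))) w :=
      HasDerivAt.fun_sum fun n _ =>
        ((hasDerivAt_zpow n w (Or.inl hw0)).mul_const _).const_mul _
    let G : ℂ → ℂ := fun z => (∏ k ∈ Finset.range N, (1 + z * p ^ (2 * (k + 1) + 1))) *
      ∏ k ∈ Finset.range (N + 1), (1 + z⁻¹ * p ^ (2 * k + 1))
    have hG : DifferentiableAt ℂ G w := by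
      have hi : DifferentiableAt ℂ (fun z : ℂ => z⁻¹) w := differentiableAt_inv hw0
      refine DifferentiableAt.mul ?_ ?_
      · exact DifferentiableAt.fun_finsetProd fun k _ => by fun_prop
      · exact DifferentiableAt.fun_finsetProd fun k _ => by fun_prop
    have hd2 : HasDerivAt (fun z : ℂ => (1 + z * p) * G z) (p * G w) w := by
      have ha : HasDerivAt (fun z : ℂ => 1 + z * p) p w := by
        simpa using ((hasDerivAt_id w).mul_const p).const_add 1
      have := ha.mul hG.hasDerivAt
      rwa [show 1 + w * p = 0 by rw [hw]; field_simp; ring, zero_mul, add_zero] at this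
    have heq : (fun z : ℂ => (1 + z * p) * G z) =ᶠ[nhds w]
        fun z : ℂ => ∑ n ∈ Finset.Icc (-((N + 1 : ℕ) : ℤ)) (N + 1 : ℕ),
          centralGaussBinom (p ^ 2) (N + 1) n * (z ^ n * p ^ (n ^ 2)) := by
      filter_upwards [isOpen_ne.mem_nhds hw0] with z hz
      rw [← prod_one_add_mul_one_add_inv p z hp hz, Finset.prod_mul_distrib,
        Finset.prod_range_succ' (fun k => 1 + z * p ^ (2 * k + 1))]
      simp only [G]
      ring
    have hu := (hd1.congr_of_eventuallyEq heq).unique hd2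
    have hGw : G w = qPoch (p ^ 2) N * qPoch (p ^ 2) (N + 1) := by
      simp only [G, qPoch]
      congr 1
      · refine Finset.prod_congr rfl fun k _ => ?_
        rw [hw]
        field_simp
        ring
      · refine Finset.prod_congr rfl fun k _ => ?_
        rw [hw]
        field_simp
        ring
    rw [hGw] at hu
    have hterm : ∀ n : ℤ, centralGaussBinom (p ^ 2) (N + 1) n * ((n : ℂ) * (w ^ n * p ^ (n ^ 2))) =
        w * (centralGaussBinom (p ^ 2) (N + 1) n * (((n : ℂ) * w ^ (n - 1)) * p ^ (n ^ 2))) := by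
      intro n
      have : w ^ n = w * w ^ (n - 1) := by
        rw [← zpow_one_add₀ hw0]; congr 1; ring
      rw [this]
      ring
    simp_rw [hterm]
    rw [← Finset.mul_sum, hu, hw]
    field_simp
  have h2 : Filter.Tendsto (fun N : ℕ => -(qPoch (p ^ 2) N * qPoch (p ^ 2) (N + 1))) Filter.atTop
      (nhds (-(eulerPhi (p ^ 2) * eulerPhi (p ^ 2)))) :=
    ((tendsto_qPoch hQ).mul ((tendsto_qPoch hQ).comp (Filter.tendsto_add_atTop_nat 1))).neg
  have h3 := h1.comp (Filter.tendsto_add_atTop_nat 1)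
  have h4 := tendsto_nhds_unique h3 (h2.congr fun N => (hfin N).symm)
  rw [inv_mul_eq_iff_eq_mul₀ hφ] at h4
  rw [h4]
  ring

lemma tsum_int_parity {f : ℤ → ℂ} (hf : Summable f) :
    ∑' n, f n = ∑' n, f (2 * n) + ∑' n, f (2 * n + 1) := by
  let e : ℤ ⊕ ℤ ≃ ℤ := Equiv.ofBijective (Sum.elim (fun n => 2 * n) fun n => 2 * n + 1) (by
    constructor
    · rintro (a | a) (b | b) h <;> simp only [Sum.elim_inl, Sum.elim_inr] at h
      · exact congrArg Sum.inl (by omega)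
      · omega
      · omega
      · exact congrArg Sum.inr (by omega)
    · intro n
      rcases Int.even_or_odd' n with ⟨k, rfl | rfl⟩
      · exact ⟨Sum.inl k, rfl⟩
      · exact ⟨Sum.inr k, rfl⟩)
  have hs : Summable (f ∘ e) := e.summable_iff.2 hf
  rw [← e.tsum_eq, Summable.tsum_sum (f := fun i => f (e i)) (hs.comp_injective Sum.inl_injective)
    (hs.comp_injective Sum.inr_injective)]
  rfl

lemma tsum_int_prod_parity {f : ℤ × ℤ → ℂ} (hf : Summable f) :
    ∑' u, f u = ∑' u : ℤ × ℤ, f (u.1 + u.2, u.1 - u.2) +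
      ∑' u : ℤ × ℤ, f (u.1 + u.2 + 1, u.1 - u.2) := by
  let e : (ℤ × ℤ) ⊕ (ℤ × ℤ) ≃ ℤ × ℤ := Equiv.ofBijective
    (Sum.elim (fun u => (u.1 + u.2, u.1 - u.2)) fun u => (u.1 + u.2 + 1, u.1 - u.2)) (by
    constructor
    · rintro (⟨a, b⟩ | ⟨a, b⟩) (⟨c, d⟩ | ⟨c, d⟩) h <;>
        simp only [Sum.elim_inl, Sum.elim_inr, Prod.mk.injEq] at h
      · exact congrArg Sum.inl (Prod.ext (by dsimp; omega) (by dsimp; omega))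
      · omega
      · omega
      · exact congrArg Sum.inr (Prod.ext (by dsimp; omega) (by dsimp; omega))
    · rintro ⟨a, b⟩
      rcases Int.even_or_odd' (a - b) with ⟨k, h | h⟩
      · exact ⟨Sum.inl (b + k, k), Prod.ext (by dsimp; omega) (by dsimp; omega)⟩
      · exact ⟨Sum.inr (b + k, k), Prod.ext (by dsimp; omega) (by dsimp; omega)⟩)
  have hs : Summable (f ∘ e) := e.summable_iff.2 hf
  rw [← e.tsum_eq, Summable.tsum_sum (f := fun i => f (e i)) (hs.comp_injective Sum.inl_injective)
    (hs.comp_injective Sum.inr_injective)]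
  rfl

/-- The theta series over even integers. -/
noncomputable def evenTheta (x : ℂ) : ℂ := ∑' n : ℤ, x ^ ((2 * n) ^ 2)

/-- The theta series over odd integers. -/
noncomputable def oddTheta (x : ℂ) : ℂ := ∑' n : ℤ, x ^ ((2 * n + 1) ^ 2)

lemma two_mul_injective : Function.Injective fun n : ℤ => 2 * n := fun a b h => by
  dsimp at h; omega

lemma two_mul_add_one_injective : Function.Injective fun n : ℤ => 2 * n + 1 := fun a b h => by
  dsimp at h; omega

lemma summable_norm_zpow_sq {x : ℂ} (hx : x ≠ 0) (hx1 : ‖x‖ < 1) :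
    Summable fun n : ℤ => ‖x ^ (n ^ 2)‖ := by
  simpa using summable_abs_pow_mul_norm_zpow 0 hx hx1 one_ne_zero

lemma summable_norm_sq_mul_zpow_sq {x : ℂ} (hx : x ≠ 0) (hx1 : ‖x‖ < 1) :
    Summable fun n : ℤ => ‖(n : ℂ) ^ 2 * x ^ (n ^ 2)‖ := by
  refine (summable_abs_pow_mul_norm_zpow 2 hx hx1 one_ne_zero).congr fun n => ?_
  rw [one_zpow, one_mul, norm_mul, norm_pow, Complex.norm_intCast, Int.cast_abs]

lemma tsum_sign_zpow_sq_sq {x ε : ℂ} (hx : x ≠ 0) (hx1 : ‖x‖ < 1) (hε : ε ^ 2 = 1) :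
    (∑' n : ℤ, ε ^ n * (x ^ 2) ^ (n ^ 2)) ^ 2 = evenTheta x ^ 2 + ε * oddTheta x ^ 2 := by
  have hε0 : ε ≠ 0 := by rintro rfl; norm_num at hε
  have hs := summable_zpow_mul_zpow_sq (pow_ne_zero 2 hx) (norm_sq_lt_one hx1) hε0
  have hn := summable_norm_zpow_sq hx hx1
  rw [sq, tsum_mul_tsum_of_summable_norm hs.norm hs.norm,
    tsum_int_prod_parity (summable_mul_of_summable_norm hs.norm hs.norm), evenTheta, oddTheta,
    sq (∑' n : ℤ, x ^ ((2 * n) ^ 2)),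
    tsum_mul_tsum_of_summable_norm (hn.comp_injective two_mul_injective)
      (hn.comp_injective two_mul_injective),
    sq (∑' n : ℤ, x ^ ((2 * n + 1) ^ 2)),
    tsum_mul_tsum_of_summable_norm (hn.comp_injective two_mul_add_one_injective)
      (hn.comp_injective two_mul_add_one_injective), ← tsum_mul_left]
  have hsign : ∀ s : ℤ, ε ^ (2 * s) = 1 := fun s => by
    rw [zpow_mul, zpow_two, ← sq, hε, one_zpow]
  have hx2 : ∀ m : ℤ, (x ^ 2) ^ m = x ^ (2 * m) := fun m => by
    rw [zpow_mul]; norm_cast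
  congr 1
  · refine tsum_congr fun u => ?_
    dsimp only
    rw [mul_mul_mul_comm, ← zpow_add₀ hε0, hx2, hx2, ← zpow_add₀ hx, ← zpow_add₀ hx,
      show u.1 + u.2 + (u.1 - u.2) = 2 * u.1 by ring, hsign, one_mul]
    congr 1
    ring
  · refine tsum_congr fun u => ?_
    dsimp only
    rw [mul_mul_mul_comm, ← zpow_add₀ hε0, hx2, hx2, ← zpow_add₀ hx, ← zpow_add₀ hx,
      show u.1 + u.2 + 1 + (u.1 - u.2) = 2 * u.1 + 1 by ring, zpow_add₀ hε0, hsign, one_mul,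
      zpow_one]
    congr 2
    ring

lemma tsum_mul_zpow_eq_eulerPhi_cube {x : ℂ} (hx : x ≠ 0) (hx1 : ‖x‖ < 1) :
    (Summable fun a : ℤ => (4 * a + 1 : ℂ) * x ^ (8 * a ^ 2 + 4 * a)) ∧
    ∑' a : ℤ, (4 * a + 1 : ℂ) * x ^ (8 * a ^ 2 + 4 * a) = eulerPhi (x ^ 4) ^ 3 := by
  have hp : x ^ 2 ≠ 0 := pow_ne_zero 2 hx
  have hp1 := norm_sq_lt_one hx1
  have hx2 : ∀ m : ℤ, (x ^ 2) ^ m = x ^ (2 * m) := fun m => by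
    rw [zpow_mul]; norm_cast
  have hs := summable_mul_zpow_mul_zpow_sq hp hp1 (neg_ne_zero.2 (inv_ne_zero hp))
  have key := tsum_mul_neg_inv_zpow hp hp1
  set f : ℤ → ℂ := fun n => (n : ℂ) * ((-(x ^ 2)⁻¹) ^ n * (x ^ 2) ^ (n ^ 2)) with hf
  have hse : Summable fun a : ℤ => f (2 * -a) :=
    (hs.comp_injective two_mul_injective).comp_injective neg_injective
  have hso : Summable fun a : ℤ => f (2 * a + 1) := hs.comp_injective two_mul_add_one_injective
  have hterm : ∀ a : ℤ, (4 * a + 1 : ℂ) * x ^ (8 * a ^ 2 + 4 * a) =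
      -(f (2 * -a) + f (2 * a + 1)) := by
    intro a
    have h1 : (-(x ^ 2)⁻¹) ^ (2 * -a) * (x ^ 2) ^ ((2 * -a) ^ 2) = x ^ (8 * a ^ 2 + 4 * a) := by
      rw [Even.neg_zpow ⟨-a, by ring⟩, inv_zpow', hx2, hx2, ← zpow_add₀ hx]
      congr 1
      ring
    have h2 : (-(x ^ 2)⁻¹) ^ (2 * a + 1) * (x ^ 2) ^ ((2 * a + 1) ^ 2) =
        -x ^ (8 * a ^ 2 + 4 * a) := by
      rw [Odd.neg_zpow ⟨a, rfl⟩, inv_zpow', hx2, hx2, neg_mul, ← zpow_add₀ hx]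
      congr 2
      ring
    simp only [hf]
    rw [h1, h2]
    push_cast
    ring
  refine ⟨((hse.add hso).neg).congr fun a => (hterm a).symm, ?_⟩
  have hneg : ∑' a : ℤ, f (2 * -a) = ∑' a : ℤ, f (2 * a) :=
    (Equiv.neg ℤ).tsum_eq fun a => f (2 * a)
  rw [tsum_congr hterm, tsum_neg, hse.tsum_add hso, neg_eq_iff_eq_neg, hneg,
    ← tsum_int_parity hs, key]
  ring_nf

/-- The Wronskian of the even and odd theta series. -/
lemma wronskian_evenTheta_oddTheta {x : ℂ} (hx : x ≠ 0) (hx1 : ‖x‖ < 1) :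
    evenTheta x * (∑' n : ℤ, ((2 * n + 1 : ℤ) : ℂ) ^ 2 * x ^ ((2 * n + 1) ^ 2)) -
      (∑' n : ℤ, ((2 * n : ℤ) : ℂ) ^ 2 * x ^ ((2 * n) ^ 2)) * oddTheta x =
      2 * x * eulerPhi (x ^ 4) ^ 6 := by
  have hn := summable_norm_zpow_sq hx hx1
  have hn2 := summable_norm_sq_mul_zpow_sq hx hx1
  have he := hn.comp_injective two_mul_injective
  have ho := hn.comp_injective two_mul_add_one_injective
  have he2 := hn2.comp_injective two_mul_injective
  have ho2 := hn2.comp_injective two_mul_add_one_injective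
  obtain ⟨hk, hk3⟩ := tsum_mul_zpow_eq_eulerPhi_cube hx hx1
  set g : ℤ → ℂ := fun a => (4 * a + 1 : ℂ) * x ^ (8 * a ^ 2 + 4 * a) with hg
  have hkk : ∑' u : ℤ × ℤ, g u.1 * g u.2 = eulerPhi (x ^ 4) ^ 6 := by
    rw [← tsum_mul_tsum_of_summable_norm hk.norm hk.norm, hk3]
    ring
  rw [evenTheta, oddTheta, tsum_mul_tsum_of_summable_norm he ho2,
    tsum_mul_tsum_of_summable_norm he2 ho,
    ← (summable_mul_of_summable_norm he ho2).tsum_sub (summable_mul_of_summable_norm he2 ho),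
    tsum_int_prod_parity ((summable_mul_of_summable_norm he ho2).sub
      (summable_mul_of_summable_norm he2 ho))]
  have hx1' : ∀ m : ℤ, x * x ^ m = x ^ (1 + m) := fun m => (zpow_one_add₀ hx m).symm
  rw [two_mul, add_mul]
  congr 1
  · rw [← hkk, ← ((Equiv.refl ℤ).prodCongr (Equiv.neg ℤ)).tsum_eq, ← tsum_mul_left]
    refine tsum_congr fun ⟨a, b⟩ => ?_
    simp only [hg, Equiv.prodCongr_apply, Prod.map, Equiv.refl_apply,
      Equiv.neg_apply]
    have e : x ^ ((2 * (a + -b)) ^ 2) * x ^ ((2 * (a - -b) + 1) ^ 2) =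
        x * (x ^ (8 * a ^ 2 + 4 * a) * x ^ (8 * b ^ 2 + 4 * b)) := by
      rw [← zpow_add₀ hx, ← zpow_add₀ hx, hx1']
      congr 1
      ring
    push_cast
    linear_combination (4 * (a : ℂ) + 1) * (4 * b + 1) * e
  · rw [← hkk, ← ((Equiv.subLeft (-1 : ℤ)).prodCongr (Equiv.refl ℤ)).tsum_eq, ← tsum_mul_left]
    refine tsum_congr fun ⟨a, b⟩ => ?_
    simp only [hg, Equiv.prodCongr_apply, Prod.map, Equiv.refl_apply,
      Equiv.subLeft_apply]
    have e : x ^ ((2 * (-1 - a + b + 1)) ^ 2) * x ^ ((2 * (-1 - a - b) + 1) ^ 2) =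
        x * (x ^ (8 * a ^ 2 + 4 * a) * x ^ (8 * b ^ 2 + 4 * b)) := by
      rw [← zpow_add₀ hx, ← zpow_add₀ hx, hx1']
      congr 1
      ring
    push_cast
    linear_combination (4 * (a : ℂ) + 1) * (4 * b + 1) * e

lemma eulerPhi_eq_odd_mul {q : ℂ} (hq : ‖q‖ < 1) :
    eulerPhi q = (∏' k : ℕ, (1 + -1 * q ^ (2 * k + 1))) * eulerPhi (q ^ 2) := by
  have h2 := ModularForm.multipliable_one_sub_pow (norm_sq_lt_one hq)
  have e1 : ∀ k : ℕ, 1 + -1 * q ^ (2 * k + 1) = 1 - q ^ (2 * k + 1) := fun k => by ring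
  have e2 : ∀ k : ℕ, 1 - (q ^ 2) ^ (k + 1) = 1 - q ^ (2 * k + 1 + 1) := fun k => by ring
  have h1 := multipliable_one_add_mul_pow hq (-1)
  simp_rw [eulerPhi, e1, e2] at *
  exact (tprod_even_mul_odd (f := fun n => 1 - q ^ (n + 1)) h1 h2).symm

lemma tprod_one_add_odd_mul {q : ℂ} (hq : ‖q‖ < 1) :
    (∏' k : ℕ, (1 + 1 * q ^ (2 * k + 1))) * (eulerPhi q * eulerPhi (q ^ 4)) =
      eulerPhi (q ^ 2) ^ 2 := by
  have hq2 := norm_sq_lt_one hq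
  have h : (∏' k : ℕ, (1 + 1 * q ^ (2 * k + 1))) * ∏' k : ℕ, (1 + -1 * q ^ (2 * k + 1)) =
      ∏' k : ℕ, (1 + -1 * (q ^ 2) ^ (2 * k + 1)) := by
    rw [← (multipliable_one_add_mul_pow hq 1).tprod_mul (multipliable_one_add_mul_pow hq (-1))]
    exact tprod_congr fun k => by ring
  have h2 := eulerPhi_eq_odd_mul hq2
  rw [← pow_mul] at h2
  rw [eulerPhi_eq_odd_mul hq]
  linear_combination eulerPhi (q ^ 2) * eulerPhi (q ^ 4) * h - eulerPhi (q ^ 2) * h2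

/-- The product formula for `∑ (-1)ⁿ q^(n²)`. -/
lemma tsum_neg_one_zpow_mul_eulerPhi {q : ℂ} (hq0 : q ≠ 0) (hq : ‖q‖ < 1) :
    (∑' n : ℤ, (-1) ^ n * q ^ (n ^ 2)) * eulerPhi (q ^ 2) = eulerPhi q ^ 2 := by
  rw [jacobi_triple_product hq0 hq (by norm_num), eulerPhi_eq_odd_mul hq, inv_neg, inv_one]
  ring

/-- The product formula for `∑ q^(n²)`. -/
lemma tsum_one_zpow_mul_eulerPhi {q : ℂ} (hq0 : q ≠ 0) (hq : ‖q‖ < 1) :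
    (∑' n : ℤ, 1 ^ n * q ^ (n ^ 2)) * (eulerPhi q * eulerPhi (q ^ 4)) ^ 2 =
      eulerPhi (q ^ 2) ^ 5 := by
  rw [jacobi_triple_product hq0 hq one_ne_zero, inv_one]
  have h := tprod_one_add_odd_mul hq
  set P := ∏' k : ℕ, (1 + 1 * q ^ (2 * k + 1))
  linear_combination eulerPhi (q ^ 2) *
    (P * (eulerPhi q * eulerPhi (q ^ 4)) + eulerPhi (q ^ 2) ^ 2) * h

lemma multipliable_one_add_pow {q : ℂ} (hq : ‖q‖ < 1) :
    Multipliable fun k : ℕ => 1 + q ^ (k + 1) := by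
  apply multipliable_one_add_of_summable
  simpa using (summable_nat_add_iff 1).mpr (summable_geometric_of_lt_one (norm_nonneg _) hq)

lemma tprod_one_add_pow {q : ℂ} (hq : ‖q‖ < 1) :
    ∏' k : ℕ, (1 + q ^ k) = 2 * ∏' k : ℕ, (1 + q ^ (k + 1)) := by
  have key : ∀ f : ℕ → ℂ, (Multipliable fun n => f (n + 1)) →
      ∏' n, f n = f 0 * ∏' n, f (n + 1) := fun f hf => tprod_eq_zero_mul' hf
  rw [key (fun k => 1 + q ^ k) (multipliable_one_add_pow hq), pow_zero, one_add_one_eq_two]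

lemma tsum_zpow_mul_eulerPhi {p : ℂ} (hp0 : p ≠ 0) (hp : ‖p‖ < 1) :
    (∑' n : ℤ, p ^ n * p ^ (n ^ 2)) * eulerPhi (p ^ 2) = 2 * eulerPhi (p ^ 4) ^ 2 := by
  have hp2 := norm_sq_lt_one hp
  have hR : (∏' k : ℕ, (1 + (p ^ 2) ^ (k + 1))) * eulerPhi (p ^ 2) = eulerPhi (p ^ 4) := by
    rw [eulerPhi, eulerPhi, ← (multipliable_one_add_pow hp2).tprod_mul
      (ModularForm.multipliable_one_sub_pow hp2)]
    exact tprod_congr fun k => by ring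
  have hP1 : ∏' k : ℕ, (1 + p * p ^ (2 * k + 1)) = ∏' k : ℕ, (1 + (p ^ 2) ^ (k + 1)) :=
    tprod_congr fun k => by ring
  have hP2 : ∏' k : ℕ, (1 + p⁻¹ * p ^ (2 * k + 1)) =
      2 * ∏' k : ℕ, (1 + (p ^ 2) ^ (k + 1)) := by
    have e : ∀ k : ℕ, 1 + p⁻¹ * p ^ (2 * k + 1) = 1 + (p ^ 2) ^ k := fun k => by
      rw [pow_succ, mul_comm (p ^ (2 * k)), inv_mul_cancel_left₀ hp0, pow_mul]
    rw [tprod_congr e, tprod_one_add_pow hp2]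
  rw [jacobi_triple_product hp0 hp hp0, hP1, hP2, ← hR]
  ring

lemma oddTheta_mul_eulerPhi {x : ℂ} (hx : x ≠ 0) (hx1 : ‖x‖ < 1) :
    oddTheta x * eulerPhi (x ^ 8) = 2 * x * eulerPhi (x ^ 16) ^ 2 := by
  have hp : ‖x ^ 4‖ < 1 := by
    rw [norm_pow]; exact pow_lt_one₀ (norm_nonneg _) hx1 (by norm_num)
  have h1 : oddTheta x = x * ∑' n : ℤ, (x ^ 4) ^ n * (x ^ 4) ^ (n ^ 2) := by
    rw [oddTheta, ← tsum_mul_left]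
    refine tsum_congr fun n => ?_
    have hx4 : ∀ m : ℤ, (x ^ 4) ^ m = x ^ (4 * m) := fun m => by
      rw [zpow_mul]; norm_cast
    rw [hx4, hx4, ← zpow_add₀ hx, ← zpow_one_add₀ hx]
    congr 1
    ring
  have h := tsum_zpow_mul_eulerPhi (pow_ne_zero 4 hx) hp
  rw [← pow_mul, ← pow_mul] at h
  rw [h1]
  linear_combination x * h

lemma evenTheta_mul_eulerPhi {x : ℂ} (hx : x ≠ 0) (hx1 : ‖x‖ < 1) :
    evenTheta x * (eulerPhi (x ^ 4) * eulerPhi (x ^ 16)) ^ 2 = eulerPhi (x ^ 8) ^ 5 := by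
  have hp : ‖x ^ 4‖ < 1 := by
    rw [norm_pow]; exact pow_lt_one₀ (norm_nonneg _) hx1 (by norm_num)
  have h := tsum_one_zpow_mul_eulerPhi (pow_ne_zero 4 hx) hp
  rw [← pow_mul, ← pow_mul] at h
  rw [← h, evenTheta]
  congr 1
  refine tsum_congr fun n => ?_
  rw [one_zpow, one_mul, show (2 * n) ^ 2 = 4 * n ^ 2 by ring, zpow_mul]
  norm_cast

lemma norm_cexp_pi_mul_I (τ : ℂ) : ‖cexp (Real.pi * I * τ)‖ = Real.exp (-Real.pi * τ.im) := by
  rw [Complex.norm_exp]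
  congr 1
  simp

lemma norm_cexp_pi_mul_I_lt_one {τ : ℂ} (hτ : 0 < τ.im) : ‖cexp (Real.pi * I * τ)‖ < 1 := by
  rw [norm_cexp_pi_mul_I, Real.exp_lt_one_iff]
  nlinarith [Real.pi_pos]

lemma hasDerivAt_tsum_cexp_zpow_sq {g : ℤ → ℤ} (hg : Function.Injective g) {τ : ℂ}
    (hτ : 0 < τ.im) :
    HasDerivAt (fun w : ℂ => ∑' n : ℤ, cexp (Real.pi * I * w) ^ (g n ^ 2))
      (Real.pi * I * ∑' n : ℤ, (g n : ℂ) ^ 2 * cexp (Real.pi * I * τ) ^ (g n ^ 2)) τ := by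
  have hd : ∀ (m : ℤ) (w : ℂ), HasDerivAt (fun w : ℂ => cexp (Real.pi * I * w) ^ (m ^ 2))
      (Real.pi * I * ((m : ℂ) ^ 2 * cexp (Real.pi * I * w) ^ (m ^ 2))) w := by
    intro m w
    have he : ∀ v : ℂ, cexp (Real.pi * I * v) ^ (m ^ 2) =
        cexp (((m ^ 2 : ℤ) : ℂ) * (Real.pi * I * v)) := fun v => (Complex.exp_int_mul _ _).symm
    simp_rw [he]
    refine ((((hasDerivAt_id' w).const_mul (Real.pi * I : ℂ)).const_mul
      (((m ^ 2 : ℤ) : ℂ))).cexp).congr_deriv ?_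
    push_cast
    ring
  let U : Set ℂ := {w | τ.im / 2 < w.im}
  have hU : IsOpen U := isOpen_lt continuous_const Complex.continuous_im
  have hτU : τ ∈ U := by
    change τ.im / 2 < τ.im
    linarith
  have hi : 0 < (τ / 2).im := by
    have : (τ / 2).im = τ.im / 2 := by simp
    rw [this]
    linarith
  have hu : Summable fun n : ℤ => ‖cexp (Real.pi * I * (τ / 2)) ^ (g n ^ 2)‖ :=
    (summable_norm_zpow_sq (exp_ne_zero _) (norm_cexp_pi_mul_I_lt_one hi)).comp_injective hg
  have hf : ∀ n : ℤ, DifferentiableOn ℂ (fun w : ℂ => cexp (Real.pi * I * w) ^ (g n ^ 2)) U :=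
    fun n w _ => (hd (g n) w).differentiableAt.differentiableWithinAt
  have hle : ∀ (n : ℤ) (w : ℂ), w ∈ U → ‖cexp (Real.pi * I * w) ^ (g n ^ 2)‖ ≤
      ‖cexp (Real.pi * I * (τ / 2)) ^ (g n ^ 2)‖ := by
    intro n w hw
    have hw' : τ.im / 2 < w.im := hw
    lift g n ^ 2 to ℕ using sq_nonneg _ with m
    rw [zpow_natCast, zpow_natCast, norm_pow, norm_pow, norm_cexp_pi_mul_I, norm_cexp_pi_mul_I]
    gcongr ?_ ^ m
    apply Real.exp_le_exp.2
    have : (τ / 2).im = τ.im / 2 := by simp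
    rw [this]
    nlinarith [Real.pi_pos]
  have hdiff := (differentiableOn_tsum_of_summable_norm hu hf hU hle).differentiableAt
    (hU.mem_nhds hτU)
  have hsum := hasSum_deriv_of_summable_norm hu hf hU hle hτU
  have := hdiff.hasDerivAt
  rwa [← hsum.tsum_eq, tsum_congr fun n => (hd (g n) τ).deriv, tsum_mul_left] at this

lemma η_eq_eta : η = ModularForm.eta := by
  ext τ
  simp only [η, ModularForm.eta, ModularForm.eta_q_eq_pow, qq, Function.Periodic.qParam]
  congr 2
  push_cast
  ring

lemma E₂_eq_E2 (τ : UpperHalfPlane) : E₂ τ = EisensteinSeries.E2 τ := by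
  rw [E₂, EisensteinSeries.E2_eq_tsum_cexp, tsum_pnat_eq_tsum_succ
    (f := fun n : ℕ => (ArithmeticFunction.sigma 1 n : ℂ) * cexp (2 * Real.pi * I * τ) ^ n)]
  simp [sigmaC, qq, ArithmeticFunction.sigma_apply]

lemma η_ne_zero {τ : ℂ} (hτ : 0 < τ.im) : η τ ≠ 0 := by
  rw [η_eq_eta]
  exact ModularForm.eta_ne_zero hτ

lemma hasDerivAt_η {τ : ℂ} (hτ : 0 < τ.im) :
    HasDerivAt η (Real.pi * I / 12 * E₂ τ * η τ) τ := by
  have h1 := (ModularForm.differentiableAt_eta_of_mem_upperHalfPlaneSet hτ).hasDerivAt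
  have h2 := ModularForm.logDeriv_eta_eq_E2 ⟨τ, hτ⟩
  rw [← E₂_eq_E2, logDeriv_apply, div_eq_iff (ModularForm.eta_ne_zero hτ)] at h2
  change deriv ModularForm.eta τ = Real.pi * I / 12 * E₂ τ * ModularForm.eta τ at h2
  rw [η_eq_eta, ← h2]
  exact h1

lemma im_natCast_mul (k : ℕ) (τ : ℂ) : ((k : ℂ) * τ).im = k * τ.im := by simp

lemma hasDerivAt_η_mul {k : ℕ} (hk : 0 < k) {τ : ℂ} (hτ : 0 < τ.im) :
    HasDerivAt (fun w : ℂ => η (k * w)) (k * (Real.pi * I / 12) * E₂ (k * τ) * η (k * τ)) τ := by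
  have hk' : 0 < ((k : ℂ) * τ).im := by rw [im_natCast_mul]; positivity
  refine ((hasDerivAt_η hk').comp τ ((hasDerivAt_id' τ).const_mul (k : ℂ))).congr_deriv ?_
  ring

lemma η_natCast_mul (k : ℕ) (τ : ℂ) :
    η (k * τ) = cexp (Real.pi * I * τ / 12) ^ k *
      eulerPhi (cexp (Real.pi * I * τ) ^ (2 * k)) := by
  rw [η, eulerPhi, ← Complex.exp_nat_mul]
  congr 1
  · congr 1
    ring
  · have : qq (k * τ) = cexp (Real.pi * I * τ) ^ (2 * k) := by
      rw [qq, ← Complex.exp_nat_mul]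
      congr 1
      push_cast
      ring
    rw [this]

/-- The eta quotients for the even and odd theta series and for their Wronskian. -/
lemma theta_eta_identities {τ : ℂ} (hτ : 0 < τ.im) :
    evenTheta (cexp (Real.pi * I * τ)) * oddTheta (cexp (Real.pi * I * τ)) * η (2 * τ) ^ 2 =
        2 * η (4 * τ) ^ 4 ∧
    (evenTheta (cexp (Real.pi * I * τ)) ^ 2 - oddTheta (cexp (Real.pi * I * τ)) ^ 2) *
        η (2 * τ) ^ 2 = η τ ^ 4 ∧
    (evenTheta (cexp (Real.pi * I * τ)) ^ 2 + oddTheta (cexp (Real.pi * I * τ)) ^ 2) *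
        (η τ * η (4 * τ)) ^ 4 = η (2 * τ) ^ 10 ∧
    evenTheta (cexp (Real.pi * I * τ)) *
        (∑' n : ℤ, ((2 * n + 1 : ℤ) : ℂ) ^ 2 * cexp (Real.pi * I * τ) ^ ((2 * n + 1) ^ 2)) -
      (∑' n : ℤ, ((2 * n : ℤ) : ℂ) ^ 2 * cexp (Real.pi * I * τ) ^ ((2 * n) ^ 2)) *
        oddTheta (cexp (Real.pi * I * τ)) = 2 * η (2 * τ) ^ 6 := by
  have h1 := η_natCast_mul 1 τ
  have h2 := η_natCast_mul 2 τ
  have h4 := η_natCast_mul 4 τ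
  norm_num at h1 h2 h4
  have hy : cexp (Real.pi * I * τ / 12) ^ 12 = cexp (Real.pi * I * τ) := by
    rw [← Complex.exp_nat_mul]
    congr 1
    push_cast
    ring
  have hx : cexp (Real.pi * I * τ) ≠ 0 := exp_ne_zero _
  have hx1 := norm_cexp_pi_mul_I_lt_one hτ
  rw [h1, h2, h4]
  clear h1 h2 h4
  generalize cexp (Real.pi * I * τ / 12) = y at *
  generalize cexp (Real.pi * I * τ) = x at *
  have hq0 := pow_ne_zero 2 hx
  have hq := norm_sq_lt_one hx1
  have hφ : ∀ k : ℕ, k ≠ 0 → eulerPhi (x ^ k) ≠ 0 := fun k hk => eulerPhi_ne_zero (by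
    rw [norm_pow]; exact pow_lt_one₀ (norm_nonneg _) hx1 hk)
  have e1 := oddTheta_mul_eulerPhi hx hx1
  have e2 := evenTheta_mul_eulerPhi hx hx1
  have e3 := tsum_neg_one_zpow_mul_eulerPhi hq0 hq
  have e4 := tsum_one_zpow_mul_eulerPhi hq0 hq
  have e5 := tsum_sign_zpow_sq_sq hx hx1 (ε := -1) (by norm_num)
  have e6 := tsum_sign_zpow_sq_sq hx hx1 (ε := 1) (by norm_num)
  have e7 := wronskian_evenTheta_oddTheta hx hx1
  rw [← pow_mul] at e3
  rw [← pow_mul, ← pow_mul] at e4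
  norm_num at e3 e4
  refine ⟨?_, ?_, ?_, ?_⟩
  · have hne : eulerPhi (x ^ 16) ^ 2 * eulerPhi (x ^ 8) ≠ 0 :=
      mul_ne_zero (pow_ne_zero _ (hφ 16 (by norm_num))) (hφ 8 (by norm_num))
    apply mul_right_cancel₀ hne
    rw [← hy] at e1
    rw [← hy] at e2 ⊢
    linear_combination y ^ 4 * (evenTheta (y ^ 12) * (eulerPhi ((y ^ 12) ^ 4) *
      eulerPhi ((y ^ 12) ^ 16)) ^ 2) * e1 +
      y ^ 4 * (2 * y ^ 12 * eulerPhi ((y ^ 12) ^ 16) ^ 2) * e2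
  · linear_combination (-(y ^ 2 * eulerPhi (x ^ 4)) ^ 2) * e5 +
      y ^ 4 * ((∑' n : ℤ, (-1) ^ n * (x ^ 2) ^ (n ^ 2)) * eulerPhi (x ^ 4) +
        eulerPhi (x ^ 2) ^ 2) * e3
  · simp only [one_zpow, one_mul] at e6
    linear_combination (-y ^ 20 * (eulerPhi (x ^ 2) * eulerPhi (x ^ 8)) ^ 4) * e6 +
      y ^ 20 * ((∑' n : ℤ, (x ^ 2) ^ (n ^ 2)) * (eulerPhi (x ^ 2) * eulerPhi (x ^ 8)) ^ 2 +
        eulerPhi (x ^ 4) ^ 5) * e4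
  · rw [e7, ← hy]
    ring

/-- The differentiated form of `A B (A² - B²) b²⁴ = 2 (a c)¹² (A² + B²)²`, solved for the
combination of the logarithmic derivatives of `a`, `b`, `c`. -/
lemma logDeriv_combination_eq {A B A' B' a b c ea eb ec p : ℂ} (hb : b ≠ 0) (hp : p ≠ 0)
    (h1 : A * B * b ^ 2 = 2 * c ^ 4) (h2 : (A ^ 2 - B ^ 2) * b ^ 2 = a ^ 4)
    (h3 : (A ^ 2 + B ^ 2) * (a * c) ^ 4 = b ^ 10) (h4 : A * B' - A' * B = 2 * b ^ 6)
    (hd : ((p * A' * B + A * (p * B')) * (A ^ 2 - B ^ 2) +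
        A * B * (2 * A * (p * A') - 2 * B * (p * B'))) * b ^ 24 +
        A * B * (A ^ 2 - B ^ 2) * (24 * b ^ 23 * (2 * (p / 12) * eb * b)) =
      24 * (a * c) ^ 11 * (p / 12 * ea * a * c + a * (4 * (p / 12) * ec * c)) *
          (A ^ 2 + B ^ 2) ^ 2 +
        2 * (a * c) ^ 12 * (2 * (A ^ 2 + B ^ 2) * (2 * A * (p * A') + 2 * B * (p * B')))) :
    4 * ec - 4 * eb + ea = A ^ 4 - 6 * A ^ 2 * B ^ 2 + B ^ 4 := by
  have hF : A * B * (A ^ 2 - B ^ 2) * b ^ 24 = 2 * (a * c) ^ 12 * (A ^ 2 + B ^ 2) ^ 2 := by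
    linear_combination b ^ 20 * ((A ^ 2 - B ^ 2) * b ^ 2 * h1 + 2 * c ^ 4 * h2) -
      2 * (a * c) ^ 4 * ((A ^ 2 + B ^ 2) * (a * c) ^ 4 + b ^ 10) * h3
  have hS : A * B * (A ^ 2 - B ^ 2) * (A ^ 2 + B ^ 2) = 2 * b ^ 6 := by
    apply mul_right_cancel₀ (pow_ne_zero 4 hb)
    linear_combination (A ^ 2 + B ^ 2) * ((A ^ 2 - B ^ 2) * b ^ 2 * h1 + 2 * c ^ 4 * h2) + 2 * h3
  apply mul_left_cancel₀ (mul_ne_zero (mul_ne_zero two_ne_zero hp) (pow_ne_zero 30 hb))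
  linear_combination -(A ^ 2 + B ^ 2) * hd + p * b ^ 24 * (A ^ 4 - 6 * A ^ 2 * B ^ 2 + B ^ 4) * h4 -
    p * b ^ 24 * (4 * ec - 4 * eb + ea) * hS +
    ((A ^ 2 + B ^ 2) * p * (ea + 4 * ec) + 4 * p * (A * A' + B * B')) * hF

lemma E₄₂'_eq {τ : ℂ} (hτ : 0 < τ.im) :
    E₄₂' τ = evenTheta (cexp (Real.pi * I * τ)) ^ 4 -
      6 * evenTheta (cexp (Real.pi * I * τ)) ^ 2 * oddTheta (cexp (Real.pi * I * τ)) ^ 2 +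
      oddTheta (cexp (Real.pi * I * τ)) ^ 4 := by
  have hA : HasDerivAt (fun w => evenTheta (cexp (Real.pi * I * w))) _ τ :=
    hasDerivAt_tsum_cexp_zpow_sq (g := fun n => 2 * n) (fun m n h => by simpa using h) hτ
  have hB : HasDerivAt (fun w => oddTheta (cexp (Real.pi * I * w))) _ τ :=
    hasDerivAt_tsum_cexp_zpow_sq (g := fun n => 2 * n + 1) (fun m n h => by simpa using h) hτ
  have ha := hasDerivAt_η hτ
  have hb : HasDerivAt (fun w : ℂ => η (2 * w)) _ τ := hasDerivAt_η_mul two_pos hτ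
  have hc : HasDerivAt (fun w : ℂ => η (4 * w)) _ τ := hasDerivAt_η_mul four_pos hτ
  have hF := ((hA.mul hB).mul ((hA.pow 2).sub (hB.pow 2))).mul (hb.pow 24)
  have hG := (((ha.mul hc).pow 12).const_mul 2).mul (((hA.pow 2).add (hB.pow 2)).pow 2)
  have hFG := hF.unique (hG.congr_of_eventuallyEq ?_)
  · obtain ⟨h1, h2, h3, h4⟩ := theta_eta_identities hτ
    have hb0 : η (2 * τ) ≠ 0 := η_ne_zero (by simpa using hτ)
    refine logDeriv_combination_eq hb0 (mul_ne_zero (ofReal_ne_zero.2 Real.pi_ne_zero) I_ne_zero)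
      h1 h2 h3 h4 ?_
    simp only [Pi.mul_apply, Pi.pow_apply, Pi.sub_apply, Pi.add_apply, Nat.cast_ofNat] at hFG
    linear_combination hFG
  · filter_upwards [(isOpen_lt continuous_const Complex.continuous_im).mem_nhds hτ] with w hw
    obtain ⟨h1, h2, h3, -⟩ := theta_eta_identities hw
    simp only [Pi.mul_apply, Pi.pow_apply, Pi.sub_apply, Pi.add_apply]
    generalize evenTheta (cexp (Real.pi * I * w)) = A at *
    generalize oddTheta (cexp (Real.pi * I * w)) = B at *
    generalize η (2 * w) = b at *
    generalize η (4 * w) = c at *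
    generalize η w = a at *
    linear_combination b ^ 20 * ((A ^ 2 - B ^ 2) * b ^ 2 * h1 + 2 * c ^ 4 * h2) -
      2 * (a * c) ^ 4 * ((A ^ 2 + B ^ 2) * (a * c) ^ 4 + b ^ 10) * h3

lemma tsum_mul_zpow_sq_of_pow_four_eq_one {x u : ℂ} (hx : x ≠ 0) (hx1 : ‖x‖ < 1)
    (hu : u ^ 4 = 1) :
    ∑' n : ℤ, (u * x) ^ (n ^ 2) = evenTheta x + u * oddTheta x := by
  have hu0 : u ≠ 0 := by rintro rfl; norm_num at hu
  have hu4 : ∀ m : ℤ, u ^ (4 * m) = 1 := fun m => by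
    rw [zpow_mul]; norm_cast; rw [hu, one_zpow]
  have hnorm : ‖u‖ = 1 := by
    have : ‖u‖ ^ 4 = 1 := by rw [← norm_pow, hu, norm_one]
    exact (pow_eq_one_iff_of_nonneg (norm_nonneg _) (by norm_num)).1 this
  have hs : Summable fun n : ℤ => (u * x) ^ (n ^ 2) :=
    (summable_norm_zpow_sq (mul_ne_zero hu0 hx)
      (by rw [norm_mul, hnorm, one_mul]; exact hx1)).of_norm
  rw [tsum_int_parity hs, evenTheta, oddTheta, ← tsum_mul_left]
  congr 1
  · refine tsum_congr fun n => ?_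
    rw [mul_zpow, show (2 * n) ^ 2 = 4 * n ^ 2 by ring, hu4, one_mul]
  · refine tsum_congr fun n => ?_
    rw [mul_zpow]
    congr 1
    rw [show (2 * n + 1) ^ 2 = 4 * (n ^ 2 + n) + 1 by ring, zpow_add₀ hu0, hu4, one_mul, zpow_one]

lemma f₄_eq {j : ℕ} (hj : j < 2) {τ : ℂ} (hτ : 0 < τ.im) :
    f₄ j τ = evenTheta (cexp (Real.pi * I * τ)) -
      (-1) ^ j * I * oddTheta (cexp (Real.pi * I * τ)) := by
  have hq : qq (τ / 2 - (-1) ^ j / 4) = -((-1) ^ j * I) * cexp (Real.pi * I * τ) := by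
    have hsplit : 2 * Real.pi * I * (τ / 2 - (-1) ^ j / 4) =
        -((-1) ^ j * (Real.pi / 2 * I)) + Real.pi * I * τ := by ring
    rw [qq, hsplit, Complex.exp_add]
    congr 1
    interval_cases j
    · simp [Complex.exp_neg, Complex.exp_pi_div_two_mul_I]
    · simp [Complex.exp_pi_div_two_mul_I]
  have hu : (-((-1 : ℂ) ^ j * I)) ^ 4 = 1 := by
    interval_cases j <;> simp [Even.neg_pow (show Even 4 by decide)]
  rw [f₄, θ, hq, tsum_mul_zpow_sq_of_pow_four_eq_one (exp_ne_zero _)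
    (norm_cexp_pi_mul_I_lt_one hτ) hu]
  ring

lemma θ_sq_eq {τ : ℂ} (hτ : 0 < τ.im) :
    θ τ ^ 2 = evenTheta (cexp (Real.pi * I * τ)) ^ 2 +
      oddTheta (cexp (Real.pi * I * τ)) ^ 2 := by
  have h := tsum_sign_zpow_sq_sq (exp_ne_zero _) (norm_cexp_pi_mul_I_lt_one hτ) (ε := 1)
    (by norm_num)
  simp only [one_zpow, one_mul] at h
  have hq : qq τ = cexp (Real.pi * I * τ) ^ 2 := by
    rw [qq, ← Complex.exp_nat_mul]
    congr 1
    push_cast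
    ring
  rw [← h, θ, hq]

theorem stmt18 :
    (∀ j : ℕ, j < 2 → ∀ τ : ℂ, 0 < τ.im →
      f₄ j τ ^ 4 = E₄₂' τ - (-1 : ℂ) ^ j * (8 * Complex.I) * (η τ * η (4 * τ) / η (2 * τ)) ^ 4) ∧
    (∀ τ : ℂ, 0 < τ.im → f₄ 0 τ * f₄ 1 τ = θ τ ^ 2) := by
  refine ⟨fun j hj τ hτ => ?_, fun τ hτ => ?_⟩
  · obtain ⟨h1, h2, -, -⟩ := theta_eta_identities hτ
    have hb0 : η (2 * τ) ≠ 0 := η_ne_zero (by simpa using hτ)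
    have hquot : 2 * (η τ * η (4 * τ) / η (2 * τ)) ^ 4 =
        evenTheta (cexp (Real.pi * I * τ)) * oddTheta (cexp (Real.pi * I * τ)) *
        (evenTheta (cexp (Real.pi * I * τ)) ^ 2 - oddTheta (cexp (Real.pi * I * τ)) ^ 2) := by
      rw [div_pow, ← mul_div_assoc, div_eq_iff (pow_ne_zero 4 hb0), mul_pow, ← h2]
      linear_combination -(evenTheta (cexp (Real.pi * I * τ)) ^ 2 -
        oddTheta (cexp (Real.pi * I * τ)) ^ 2) * η (2 * τ) ^ 2 * h1
    rw [f₄_eq hj hτ, E₄₂'_eq hτ]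
    have hI : I ^ 2 = -1 := I_sq
    generalize evenTheta (cexp (Real.pi * I * τ)) = A at *
    generalize oddTheta (cexp (Real.pi * I * τ)) = B at *
    generalize (η τ * η (4 * τ) / η (2 * τ)) = e at *
    interval_cases j
    · linear_combination 4 * I * hquot + (6 * A ^ 2 * B ^ 2 - 4 * A * B ^ 3 * I +
        B ^ 4 * (I ^ 2 - 1)) * hI
    · linear_combination -4 * I * hquot + (6 * A ^ 2 * B ^ 2 + 4 * A * B ^ 3 * I +
        B ^ 4 * (I ^ 2 - 1)) * hI
  · rw [f₄_eq two_pos hτ, f₄_eq one_lt_two hτ, θ_sq_eq hτ]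
    linear_combination -oddTheta (cexp (Real.pi * I * τ)) ^ 2 * I_sq
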